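/- arXiv:1212.5884 — 4 statements merged into one kernel-verified Lean document; each statement's English description precedes it below -/
import Mathlib

section
/- For every Ω ∈ 𝔖₂ and every z ∈ ℂ², the following three quadratic theta relations hold (equations (E1)–(E3), the defining net of the degree-8 Kummer surface): A10²·X1² + A1²·X4² − A2²·X5² − A5²·X6² = 0, A10²·X2² + A3²·X4² − A4²·X5² − A8²·X6² = 0, and A10²·X3² + A6²·X4² − A9²·X5² − A7²·X6² = 0. -/
/-!
The three relations are linear dependencies among the products `A² X²`. They come from the
diagonal case of Riemann's addition formula: in the double series for `θ[a;b](z, Ω)²`, the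
change of variables `n = p + q + ε`, `m = p - q` with `ε ∈ {0, 1}²` (`sumDiffEquiv`) separates the
quadratic form, since `(n + a)² + (m + a)² = 2 (p + a + ε/2)² + 2 (q + ε/2)²`. Hence
`θ[a;b](z, Ω)² = ∑_ε θ[a + ε/2; 2b](2z, 2Ω) θ[ε/2; 0](0, 2Ω)` (`theta2_sq`).

For half-integral characteristics the lower characteristic `2b` contributes only signs, and the
upper one matters only modulo `1`. So every `A²` is a quadratic form in the four constants
`V_ε = θ[ε/2; 0](0, 2Ω)`, every `X²` is a bilinear form in these constants and the four functions
`U_ε = θ[ε/2; 0](4z, 2Ω)` (`theta2_half_sq`), and each relation becomes a polynomial identity in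
the `U_ε` and `V_ε`. The rearrangements are justified by absolute convergence
(`summable_norm_thetaTerm`), which follows from comparison with a product of one-variable theta
series.
-/

open Complex

/-- Genus-2 theta function with characteristics. -/
noncomputable def theta2 (a b : Fin 2 → ℝ) (z : Fin 2 → ℂ)
    (Ω : Matrix (Fin 2) (Fin 2) ℂ) : ℂ :=
  ∑' n : Fin 2 → ℤ,
    Complex.exp ((Real.pi : ℂ) * I *
        (∑ i, ∑ j, ((n i : ℂ) + (a i : ℂ)) * Ω i j * ((n j : ℂ) + (a j : ℂ)))
      + 2 * (Real.pi : ℂ) * I * (∑ i, ((n i : ℂ) + (a i : ℂ)) * (z i + (b i : ℂ))))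

/-- The Siegel upper half space of degree 2. -/
def IsSiegel (Ω : Matrix (Fin 2) (Fin 2) ℂ) : Prop :=
  Ω.IsSymm ∧ (Matrix.of fun i j => (Ω i j).im).PosDef

noncomputable def A₁ (Ω : Matrix (Fin 2) (Fin 2) ℂ) : ℂ := theta2 ![0, 0] ![0, 0] 0 Ω
noncomputable def A₂ (Ω : Matrix (Fin 2) (Fin 2) ℂ) : ℂ := theta2 ![0, 0] ![0, 1/2] 0 Ω
noncomputable def A₃ (Ω : Matrix (Fin 2) (Fin 2) ℂ) : ℂ := theta2 ![0, 0] ![1/2, 0] 0 Ω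
noncomputable def A₄ (Ω : Matrix (Fin 2) (Fin 2) ℂ) : ℂ := theta2 ![0, 0] ![1/2, 1/2] 0 Ω
noncomputable def A₅ (Ω : Matrix (Fin 2) (Fin 2) ℂ) : ℂ := theta2 ![0, 1/2] ![0, 0] 0 Ω
noncomputable def A₆ (Ω : Matrix (Fin 2) (Fin 2) ℂ) : ℂ := theta2 ![1/2, 0] ![0, 0] 0 Ω
noncomputable def A₇ (Ω : Matrix (Fin 2) (Fin 2) ℂ) : ℂ := theta2 ![1/2, 1/2] ![0, 0] 0 Ω
noncomputable def A₈ (Ω : Matrix (Fin 2) (Fin 2) ℂ) : ℂ := theta2 ![0, 1/2] ![1/2, 0] 0 Ω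
noncomputable def A₉ (Ω : Matrix (Fin 2) (Fin 2) ℂ) : ℂ := theta2 ![1/2, 0] ![0, 1/2] 0 Ω
noncomputable def A₁₀ (Ω : Matrix (Fin 2) (Fin 2) ℂ) : ℂ := theta2 ![1/2, 1/2] ![1/2, 1/2] 0 Ω

noncomputable def X₁ (z : Fin 2 → ℂ) (Ω : Matrix (Fin 2) (Fin 2) ℂ) : ℂ :=
  theta2 ![0, 1/2] ![0, 1/2] (fun i => 2 * z i) Ω
noncomputable def X₂ (z : Fin 2 → ℂ) (Ω : Matrix (Fin 2) (Fin 2) ℂ) : ℂ :=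
  theta2 ![0, 1/2] ![1/2, 1/2] (fun i => 2 * z i) Ω
noncomputable def X₃ (z : Fin 2 → ℂ) (Ω : Matrix (Fin 2) (Fin 2) ℂ) : ℂ :=
  theta2 ![1/2, 1/2] ![0, 1/2] (fun i => 2 * z i) Ω
noncomputable def X₄ (z : Fin 2 → ℂ) (Ω : Matrix (Fin 2) (Fin 2) ℂ) : ℂ :=
  theta2 ![1/2, 0] ![1/2, 0] (fun i => 2 * z i) Ω
noncomputable def X₅ (z : Fin 2 → ℂ) (Ω : Matrix (Fin 2) (Fin 2) ℂ) : ℂ :=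
  theta2 ![1/2, 0] ![1/2, 1/2] (fun i => 2 * z i) Ω
noncomputable def X₆ (z : Fin 2 → ℂ) (Ω : Matrix (Fin 2) (Fin 2) ℂ) : ℂ :=
  theta2 ![1/2, 1/2] ![1/2, 0] (fun i => 2 * z i) Ω

/-- The summand of the theta series `theta2 a b z Ω` at the lattice point `n`. -/
noncomputable def thetaTerm (a b : Fin 2 → ℝ) (z : Fin 2 → ℂ)
    (Ω : Matrix (Fin 2) (Fin 2) ℂ) (n : Fin 2 → ℤ) : ℂ :=
  Complex.exp ((Real.pi : ℂ) * I *
        (∑ i, ∑ j, ((n i : ℂ) + (a i : ℂ)) * Ω i j * ((n j : ℂ) + (a j : ℂ)))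
      + 2 * (Real.pi : ℂ) * I * (∑ i, ((n i : ℂ) + (a i : ℂ)) * (z i + (b i : ℂ))))

lemma theta2_eq_tsum_thetaTerm (a b : Fin 2 → ℝ) (z : Fin 2 → ℂ)
    (Ω : Matrix (Fin 2) (Fin 2) ℂ) : theta2 a b z Ω = ∑' n, thetaTerm a b z Ω n := rfl

/-- The imaginary part of a point of the Siegel upper half space dominates a positive multiple of
the standard quadratic form. -/
lemma IsSiegel.exists_pos_le {Ω : Matrix (Fin 2) (Fin 2) ℂ} (h : IsSiegel Ω) :
    ∃ c : ℝ, 0 < c ∧ ∀ x y : ℝ, c * (x ^ 2 + y ^ 2) ≤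
      (Ω 0 0).im * x ^ 2 + 2 * (Ω 0 1).im * x * y + (Ω 1 1).im * y ^ 2 := by
  obtain ⟨hs, hp⟩ := h
  have h10 : Ω 1 0 = Ω 0 1 := hs.apply 0 1
  have key : ∀ x y : ℝ, (x ≠ 0 ∨ y ≠ 0) →
      0 < (Ω 0 0).im * x ^ 2 + 2 * (Ω 0 1).im * x * y + (Ω 1 1).im * y ^ 2 := by
    intro x y hxy
    have hne : (![x, y] : Fin 2 → ℝ) ≠ 0 := by
      intro h0
      have h1 := congrFun h0 0
      have h2 := congrFun h0 1
      simp at h1 h2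
      tauto
    have := hp.dotProduct_mulVec_pos hne
    simp [dotProduct, Matrix.mulVec, Fin.sum_univ_two, h10] at this
    linarith
  set p := (Ω 0 0).im
  set q := (Ω 0 1).im
  set r := (Ω 1 1).im
  have hp0 : 0 < p := by simpa using key 1 0 (by simp)
  have hr0 : 0 < r := by simpa using key 0 1 (by simp)
  have hdet : 0 < p * r - q ^ 2 := by
    have := key q (-p) (Or.inr (by simpa using hp0.ne'))
    have h2 : 0 < p * (p * r - q ^ 2) := by nlinarith
    exact pos_of_mul_pos_right h2 hp0.le
  -- `det / trace` is a lower bound for the smallest eigenvalue.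
  refine ⟨(p * r - q ^ 2) / (p + r), by positivity, fun x y => ?_⟩
  rw [div_mul_eq_mul_div, div_le_iff₀ (by positivity)]
  nlinarith [sq_nonneg (p * x + q * y), sq_nonneg (q * x + r * y)]

/-- The theta series converges absolutely: its terms are dominated by a product of two terms of
one-variable theta series. -/
lemma summable_norm_thetaTerm (a b : Fin 2 → ℝ) (z : Fin 2 → ℂ)
    {Ω : Matrix (Fin 2) (Fin 2) ℂ} (hΩ : IsSiegel Ω) :
    Summable fun n => ‖thetaTerm a b z Ω n‖ := by
  obtain ⟨c, hc, hle⟩ := hΩ.exists_pos_le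
  have h10 : Ω 1 0 = Ω 0 1 := hΩ.1.apply 0 1
  have hτ : 0 < ((c : ℂ) * I).im := by simpa using hc
  have hs : ∀ w : ℂ, Summable fun n : ℤ => ‖jacobiTheta₂_term n w (c * I)‖ := fun w =>
    ((summable_jacobiTheta₂_term_iff w _).2 hτ).norm
  -- Completing the shift by `a` in `c (n + a)² + 2 (n + a) Im z` moves the elliptic variable.
  set w : Fin 2 → ℂ := fun i => ((c * a i + (z i).im : ℝ) : ℂ) * I with hw
  set K : ℝ := Real.exp (∑ i, (-Real.pi * c * a i ^ 2 - 2 * Real.pi * a i * (z i).im))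
  have h2 := (hs (w 0)).mul_of_nonneg (hs (w 1)) (fun _ => norm_nonneg _) (fun _ => norm_nonneg _)
  have h3 := ((finTwoArrowEquiv ℤ).summable_iff.2 h2).mul_left K
  refine h3.of_nonneg_of_le (fun _ => norm_nonneg _) fun n => ?_
  simp only [Function.comp, finTwoArrowEquiv_apply, norm_jacobiTheta₂_term, thetaTerm,
    Complex.norm_exp, K, ← Real.exp_add]
  rw [Real.exp_le_exp]
  have := mul_le_mul_of_nonneg_left (hle (n 0 + a 0) (n 1 + a 1)) Real.pi_pos.le
  simp [Fin.sum_univ_two, h10, hw]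
  ring_nf at this ⊢
  linarith

lemma IsSiegel.two_smul {Ω : Matrix (Fin 2) (Fin 2) ℂ} (hΩ : IsSiegel Ω) :
    IsSiegel ((2 : ℂ) • Ω) := by
  refine ⟨hΩ.1.smul 2, ?_⟩
  have : (Matrix.of fun i j => (((2 : ℂ) • Ω) i j).im) =
      (2 : ℝ) • (Matrix.of fun i j => (Ω i j).im) := by
    ext i j
    simp
  rw [this]
  exact hΩ.2.smul (by norm_num)

/-- The change of variables `n = p + q + ε`, `m = p - q` on pairs of lattice points, where
`ε ∈ {0, 1}²` is the common parity of `n + m` and `n - m`. -/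
def sumDiffEquiv : (Fin 2 → Fin 2) × ((Fin 2 → ℤ) × (Fin 2 → ℤ)) ≃ (Fin 2 → ℤ) × (Fin 2 → ℤ) where
  toFun x := (fun i => x.2.1 i + x.2.2 i + ((x.1 i : ℕ) : ℤ), fun i => x.2.1 i - x.2.2 i)
  invFun y := (fun i => ⟨((y.1 i - y.2 i) % 2).toNat, by omega⟩,
    (fun i => y.2 i + (y.1 i - y.2 i) / 2, fun i => (y.1 i - y.2 i) / 2))
  left_inv := by
    rintro ⟨e, p, q⟩
    refine Prod.ext (funext fun i => Fin.ext ?_) (Prod.ext (funext fun i => ?_) (funext fun i => ?_))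
      <;> have := (e i).isLt <;> simp only <;> omega
  right_inv := by
    rintro ⟨n, m⟩
    refine Prod.ext (funext fun i => ?_) (funext fun i => ?_) <;> simp only <;> omega

/-- Riemann's addition formula on the diagonal: the square of a theta function is a bilinear
expression in theta functions of level two. -/
lemma theta2_sq (a b : Fin 2 → ℝ) (z : Fin 2 → ℂ) {Ω : Matrix (Fin 2) (Fin 2) ℂ}
    (hΩ : IsSiegel Ω) :
    theta2 a b z Ω ^ 2 = ∑ e : Fin 2 → Fin 2,
      theta2 (fun i => a i + (e i : ℕ) / 2) (fun i => 2 * b i) (fun i => 2 * z i) ((2 : ℂ) • Ω) *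
        theta2 (fun i => (e i : ℕ) / 2) 0 0 ((2 : ℂ) • Ω) := by
  have h10 : Ω 1 0 = Ω 0 1 := hΩ.1.apply 0 1
  have hn := summable_norm_thetaTerm a b z hΩ
  have hprod := summable_mul_of_summable_norm hn hn
  rw [← sumDiffEquiv.summable_iff] at hprod
  rw [sq, theta2_eq_tsum_thetaTerm, tsum_mul_tsum_of_summable_norm hn hn,
    ← sumDiffEquiv.tsum_eq]
  refine (Summable.tsum_prod hprod).trans ?_
  rw [tsum_fintype]
  refine Finset.sum_congr rfl fun e _ => ?_
  rw [theta2_eq_tsum_thetaTerm, theta2_eq_tsum_thetaTerm, tsum_mul_tsum_of_summable_norm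
    (summable_norm_thetaTerm _ _ _ hΩ.two_smul) (summable_norm_thetaTerm _ _ _ hΩ.two_smul)]
  refine tsum_congr fun ⟨p, q⟩ => ?_
  simp only [Function.comp, thetaTerm, sumDiffEquiv, Equiv.coe_fn_mk, ← Complex.exp_add, Fin.sum_univ_two,
    Matrix.smul_apply, smul_eq_mul, h10]
  congr 1
  push_cast
  simp
  ring

/-- The level-two theta function with upper characteristic `(i/2, j/2)` and lower
characteristic zero. -/
noncomputable def levelTwo (i j : ℕ) (w : Fin 2 → ℂ) (Ω : Matrix (Fin 2) (Fin 2) ℂ) : ℂ :=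
  theta2 ![(i : ℝ) / 2, (j : ℝ) / 2] 0 w ((2 : ℂ) • Ω)

lemma theta2_add_nat (a b : Fin 2 → ℝ) (m : Fin 2 → ℕ) (z : Fin 2 → ℂ)
    (Ω : Matrix (Fin 2) (Fin 2) ℂ) :
    theta2 (fun i => a i + m i) b z Ω = theta2 a b z Ω := by
  symm
  rw [theta2, theta2, ← (Equiv.addRight (fun i => (m i : ℤ))).tsum_eq]
  refine tsum_congr fun n => ?_
  simp only [Equiv.coe_addRight, Pi.add_apply]
  push_cast
  simp only [add_comm, add_left_comm]

lemma levelTwo_add_two_left (i j : ℕ) (w : Fin 2 → ℂ) (Ω : Matrix (Fin 2) (Fin 2) ℂ) :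
    levelTwo (i + 2) j w Ω = levelTwo i j w Ω := by
  rw [levelTwo, levelTwo, ← theta2_add_nat ![(i : ℝ) / 2, (j : ℝ) / 2] 0 ![1, 0]]
  congr 1
  ext k
  fin_cases k <;> simp [add_div]

lemma levelTwo_add_two_right (i j : ℕ) (w : Fin 2 → ℂ) (Ω : Matrix (Fin 2) (Fin 2) ℂ) :
    levelTwo i (j + 2) w Ω = levelTwo i j w Ω := by
  rw [levelTwo, levelTwo, ← theta2_add_nat ![(i : ℝ) / 2, (j : ℝ) / 2] 0 ![0, 1]]
  congr 1
  ext k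
  fin_cases k <;> simp [add_div]

/-- An integral lower characteristic `(k, l)` only contributes the sign
`exp (2πi (i/2, j/2) · (k, l))`. -/
lemma theta2_nat_right (i j k l : ℕ) (w : Fin 2 → ℂ) (Ω : Matrix (Fin 2) (Fin 2) ℂ) :
    theta2 ![(i : ℝ) / 2, (j : ℝ) / 2] ![(k : ℝ), (l : ℝ)] w ((2 : ℂ) • Ω) =
      (-1) ^ (i * k + j * l) * levelTwo i j w Ω := by
  rw [levelTwo, theta2, theta2, ← tsum_mul_left]
  refine tsum_congr fun n => ?_
  have h1 : ((-1 : ℂ)) ^ (i * k + j * l) =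
      Complex.exp ((i * k + j * l : ℕ) * (Real.pi * I)) := by
    rw [Complex.exp_nat_mul, Complex.exp_pi_mul_I]
  rw [h1, ← Complex.exp_add, Complex.exp_eq_exp_iff_exists_int]
  refine ⟨n 0 * k + n 1 * l, ?_⟩
  simp [Fin.sum_univ_two]
  ring

/-- The square of a theta function with half-integral characteristics, expanded in the level-two
theta functions and their constants. -/
lemma theta2_half_sq (i j k l : ℕ) (w : Fin 2 → ℂ) {Ω : Matrix (Fin 2) (Fin 2) ℂ}
    (hΩ : IsSiegel Ω) :
    theta2 ![(i : ℝ) / 2, (j : ℝ) / 2] ![(k : ℝ) / 2, (l : ℝ) / 2] w Ω ^ 2 =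
      (-1) ^ (i * k + j * l) * levelTwo i j (fun t => 2 * w t) Ω * levelTwo 0 0 0 Ω +
      (-1) ^ (i * k + (j + 1) * l) * levelTwo i (j + 1) (fun t => 2 * w t) Ω * levelTwo 0 1 0 Ω +
      (-1) ^ ((i + 1) * k + j * l) * levelTwo (i + 1) j (fun t => 2 * w t) Ω * levelTwo 1 0 0 Ω +
      (-1) ^ ((i + 1) * k + (j + 1) * l) * levelTwo (i + 1) (j + 1) (fun t => 2 * w t) Ω *
        levelTwo 1 1 0 Ω := by
  have hterm : ∀ e f : ℕ, theta2 ![((i + e : ℕ) : ℝ) / 2, ((j + f : ℕ) : ℝ) / 2]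
      ![(k : ℝ), (l : ℝ)] (fun t => 2 * w t) ((2 : ℂ) • Ω) *
      theta2 ![(e : ℝ) / 2, (f : ℝ) / 2] 0 0 ((2 : ℂ) • Ω) =
      (-1) ^ ((i + e) * k + (j + f) * l) * levelTwo (i + e) (j + f) (fun t => 2 * w t) Ω *
        levelTwo e f 0 Ω := fun e f => by rw [theta2_nat_right]; rfl
  have hsum : ∀ e : Fin 2 × Fin 2,
      theta2 (fun t => ![(i : ℝ) / 2, (j : ℝ) / 2] t + ((![e.1, e.2] t : Fin 2) : ℕ) / 2)
        (fun t => 2 * ![(k : ℝ) / 2, (l : ℝ) / 2] t) (fun t => 2 * w t) ((2 : ℂ) • Ω) *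
        theta2 (fun t => ((![e.1, e.2] t : Fin 2) : ℕ) / 2) 0 0 ((2 : ℂ) • Ω) =
      (-1) ^ ((i + e.1) * k + (j + e.2) * l) *
        levelTwo (i + e.1) (j + e.2) (fun t => 2 * w t) Ω * levelTwo e.1 e.2 0 Ω := by
    intro e
    rw [← hterm]
    congr 2
    · ext t
      fin_cases t <;> simp [add_div]
    · ext t
      fin_cases t <;> simp <;> ring
    · ext t
      fin_cases t <;> simp
  rw [theta2_sq _ _ _ hΩ, ← (finTwoArrowEquiv (Fin 2)).symm.sum_comp]
  simp only [finTwoArrowEquiv_symm_apply]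
  rw [Finset.sum_congr rfl fun e _ => hsum e, Fintype.sum_prod_type]
  simp [Fin.sum_univ_two, add_assoc]

theorem theta_relations_E1_E3
    (Ω : Matrix (Fin 2) (Fin 2) ℂ) (hΩ : IsSiegel Ω) (z : Fin 2 → ℂ) :
    (A₁₀ Ω ^ 2 * X₁ z Ω ^ 2 + A₁ Ω ^ 2 * X₄ z Ω ^ 2 - A₂ Ω ^ 2 * X₅ z Ω ^ 2 - A₅ Ω ^ 2 * X₆ z Ω ^ 2 = 0) ∧
    (A₁₀ Ω ^ 2 * X₂ z Ω ^ 2 + A₃ Ω ^ 2 * X₄ z Ω ^ 2 - A₄ Ω ^ 2 * X₅ z Ω ^ 2 - A₈ Ω ^ 2 * X₆ z Ω ^ 2 = 0) ∧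
    (A₁₀ Ω ^ 2 * X₃ z Ω ^ 2 + A₆ Ω ^ 2 * X₄ z Ω ^ 2 - A₉ Ω ^ 2 * X₅ z Ω ^ 2 - A₇ Ω ^ 2 * X₆ z Ω ^ 2 = 0) := by
  have hA := fun i j k l : ℕ => theta2_half_sq i j k l 0 hΩ
  have hX := fun i j k l : ℕ => theta2_half_sq i j k l (fun t => 2 * z t) hΩ
  have hw : (fun t : Fin 2 => 2 * (0 : Fin 2 → ℂ) t) = 0 := by
    ext t
    simp
  simp only [hw] at hA
  have e1 := hA 0 0 0 0
  have e2 := hA 0 0 0 1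
  have e3 := hA 0 0 1 0
  have e4 := hA 0 0 1 1
  have e5 := hA 0 1 0 0
  have e6 := hA 1 0 0 0
  have e7 := hA 1 1 0 0
  have e8 := hA 0 1 1 0
  have e9 := hA 1 0 0 1
  have e10 := hA 1 1 1 1
  have f1 := hX 0 1 0 1
  have f2 := hX 0 1 1 1
  have f3 := hX 1 1 0 1
  have f4 := hX 1 0 1 0
  have f5 := hX 1 0 1 1
  have f6 := hX 1 1 1 0
  have hl : ∀ j w, levelTwo 2 j w Ω = levelTwo 0 j w Ω := fun j w =>
    levelTwo_add_two_left 0 j w Ω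
  have hr : ∀ i w, levelTwo i 2 w Ω = levelTwo i 0 w Ω := fun i w =>
    levelTwo_add_two_right i 0 w Ω
  norm_num [hl, hr] at e1 e2 e3 e4 e5 e6 e7 e8 e9 e10 f1 f2 f3 f4 f5 f6
  norm_num [A₁, A₂, A₃, A₄, A₅, A₆, A₇, A₈, A₉, A₁₀, X₁, X₂, X₃, X₄, X₅, X₆]
  rw [e1, e2, e3, e4, e5, e6, e7, e8, e9, e10, f1, f2, f3, f4, f5, f6]
  refine ⟨?_, ?_, ?_⟩ <;> ring
end

section
/- Let k be a field of characteristic ≠ 2, let B0, B1, B2, B3 ∈ k, and let a1, …, a10 be the ten Veronese quadrics in B0,…,B3; assume aᵢ ≠ 0 for all i = 1,…,10. Then for every nonzero (x1,…,x6) ∈ k⁶ satisfying the three equations a10·x1² + a1·x4² − a2·x5² − a5·x6² = 0, a10·x2² + a3·x4² − a4·x5² − a8·x6² = 0, a10·x3² + a6·x4² − a9·x5² − a7·x6² = 0, the 3×6 Jacobian matrix [[a10·x1, 0, 0, a1·x4, −a2·x5, −a5·x6], [0, a10·x2, 0, a3·x4, −a4·x5, −a8·x6], [0, 0, a10·x3,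 a6·x4, −a9·x5, −a7·x6]] has rank 3 (so the three quadrics define a smooth complete intersection). -/
/-!
The three quadrics are diagonal: with `M` the `3 × 6` matrix of their coefficients, the equations say
`M *ᵥ (x ^ 2) = 0`, and the Jacobian is `M * diagonal x`. Such an intersection is smooth as soon as
all maximal minors of `M` are nonzero (`rank_mul_diagonal_eq_three`): if three coordinates of `x` are
nonzero, the corresponding three columns of the Jacobian are independent; otherwise the support of
`x` lies in a set of three columns, and invertibility of that minor forces `x = 0`.

For the Veronese quadrics every maximal minor of `M` equals `± v10 ^ 2 * vᵢ` for some `i`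
(`minor_ne_zero`). Conceptually, `M = [v10 • 1 | N * D]` with `D = diag(1, -1, -1)`, where `N` is the
action `S ↦ X * S * Xᵀ` of `X = [[B0, B1], [B2, B3]]` on symmetric `2 × 2` matrices: the columns of `N`
are the (trace, difference of diagonal entries, twice the off-diagonal entry) of the images of `1`,
`diag(1, -1)` and the swap matrix. As the action scales the determinant form by `(det X) ^ 2` and
`v10 = 2 * det X`, one has `Nᵀ * D * N = v10 ^ 2 • D`, so `det N = ± v10 ^ 3` and every `2 × 2` minor of
`N` is `± v10` times an entry of `N`. The proof below verifies the minors by expansion.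
-/

section Veronese

variable {R : Type*} [CommRing R]

/-- The ten Veronese quadrics. -/
def v1 (B0 B1 B2 B3 : R) : R := B0 ^ 2 + B1 ^ 2 + B2 ^ 2 + B3 ^ 2
def v2 (B0 B1 B2 B3 : R) : R := B0 ^ 2 - B1 ^ 2 + B2 ^ 2 - B3 ^ 2
def v3 (B0 B1 B2 B3 : R) : R := B0 ^ 2 + B1 ^ 2 - B2 ^ 2 - B3 ^ 2
def v4 (B0 B1 B2 B3 : R) : R := B0 ^ 2 - B1 ^ 2 - B2 ^ 2 + B3 ^ 2
def v5 (B0 B1 B2 B3 : R) : R := 2 * (B0 * B1 + B2 * B3)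
def v6 (B0 B1 B2 B3 : R) : R := 2 * (B0 * B2 + B1 * B3)
def v7 (B0 B1 B2 B3 : R) : R := 2 * (B0 * B3 + B1 * B2)
def v8 (B0 B1 B2 B3 : R) : R := 2 * (B0 * B1 - B2 * B3)
def v9 (B0 B1 B2 B3 : R) : R := 2 * (B0 * B2 - B1 * B3)
def v10 (B0 B1 B2 B3 : R) : R := 2 * (B0 * B3 - B1 * B2)

end Veronese

/-- Jacobian criterion for diagonal quadrics: if all maximal minors of the coefficient matrix `M` are
nonzero, the Jacobian has full rank at every nonzero common zero. -/
lemma rank_mul_diagonal_eq_three {k : Type*} [Field k] (M : Matrix (Fin 3) (Fin 6) k)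
    (hM : ∀ f : Fin 3 → Fin 6, StrictMono f → (M.submatrix id f).det ≠ 0)
    (x : Fin 6 → k) (hx : x ≠ 0) (hMx : M.mulVec (fun i => x i ^ 2) = 0) :
    (M * Matrix.diagonal x).rank = 3 := by
  classical
  have hle : (M * Matrix.diagonal x).rank ≤ 3 := by
    simpa using (M * Matrix.diagonal x).rank_le_height
  refine le_antisymm hle ?_
  let T : Finset (Fin 6) := Finset.univ.filter fun i => x i ≠ 0
  by_cases hT : 3 ≤ T.card
  · obtain ⟨S, hST, hS⟩ := Finset.exists_subset_card_eq hT
    let f := S.orderEmbOfFin hS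
    have hf : ∀ i, x (f i) ≠ 0 := fun i =>
      (Finset.mem_filter.1 (hST (S.orderEmbOfFin_mem hS i))).2
    have hsub : (M * Matrix.diagonal x).submatrix id f =
        M.submatrix id f * Matrix.diagonal (x ∘ f) := by
      ext i j
      simp [Matrix.mul_diagonal]
    have hdet : ((M * Matrix.diagonal x).submatrix id f).det ≠ 0 := by
      rw [hsub, Matrix.det_mul, Matrix.det_diagonal]
      exact mul_ne_zero (hM f f.strictMono) (Finset.prod_ne_zero_iff.2 fun i _ => hf i)
    have hr := Matrix.rank_of_isUnit _
      ((Matrix.isUnit_iff_isUnit_det _).2 (isUnit_iff_ne_zero.2 hdet))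
    have hs := Matrix.rank_submatrix_le (M * Matrix.diagonal x) id f
    rw [hr] at hs
    simpa using hs
  · exfalso
    obtain ⟨S, hTS, hS⟩ := Finset.exists_superset_card_eq (s := T) (n := 3) (by omega) (by simp)
    let f := S.orderEmbOfFin hS
    have hzero : ∀ i ∉ S, x i = 0 := fun i hi => by
      by_contra h
      exact hi (hTS (by simp [T, h]))
    -- Columns outside `S` do not contribute to `M *ᵥ (x ^ 2)`.
    have hsub : (M.submatrix id f).mulVec (fun j => x (f j) ^ 2) = 0 := by
      funext i
      have h := congrFun hMx i
      simp only [Matrix.mulVec, dotProduct, Matrix.submatrix_apply, id] at h ⊢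
      rw [← h, ← Finset.sum_subset (Finset.subset_univ S)
        (fun j _ hj => by simp [hzero j hj]), ← Finset.image_orderEmbOfFin_univ S hS,
        Finset.sum_image (fun a _ b _ hab => f.injective hab)]
    have h0 := Matrix.eq_zero_of_mulVec_eq_zero (hM f f.strictMono) hsub
    apply hx
    funext i
    by_cases hi : i ∈ S
    · obtain ⟨j, rfl⟩ : i ∈ Set.range f := by
        rw [Finset.range_orderEmbOfFin]
        exact hi
      exact pow_eq_zero_iff (two_ne_zero) |>.1 (congrFun h0 j)
    · exact hzero i hi

/-- The coefficient matrix of the three diagonal quadrics. -/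
def coeffMatrix {R : Type*} [CommRing R] (B0 B1 B2 B3 : R) : Matrix (Fin 3) (Fin 6) R :=
  Matrix.of ![![v10 B0 B1 B2 B3, 0, 0, v1 B0 B1 B2 B3, -v2 B0 B1 B2 B3, -v5 B0 B1 B2 B3],
    ![0, v10 B0 B1 B2 B3, 0, v3 B0 B1 B2 B3, -v4 B0 B1 B2 B3, -v8 B0 B1 B2 B3],
    ![0, 0, v10 B0 B1 B2 B3, v6 B0 B1 B2 B3, -v9 B0 B1 B2 B3, -v7 B0 B1 B2 B3]]

set_option maxHeartbeats 4000000 in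
/-- Every maximal minor of the coefficient matrix is, up to sign, `v10 ^ 2` times one of the ten
quadrics, hence nonzero. -/
lemma minor_ne_zero {k : Type*} [Field k] (B0 B1 B2 B3 : k)
    (h1 : v1 B0 B1 B2 B3 ≠ 0) (h2 : v2 B0 B1 B2 B3 ≠ 0) (h3 : v3 B0 B1 B2 B3 ≠ 0)
    (h4 : v4 B0 B1 B2 B3 ≠ 0) (h5 : v5 B0 B1 B2 B3 ≠ 0) (h6 : v6 B0 B1 B2 B3 ≠ 0)
    (h7 : v7 B0 B1 B2 B3 ≠ 0) (h8 : v8 B0 B1 B2 B3 ≠ 0) (h9 : v9 B0 B1 B2 B3 ≠ 0)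
    (h10 : v10 B0 B1 B2 B3 ≠ 0) (f : Fin 3 → Fin 6) (hf : StrictMono f) :
    ((coeffMatrix B0 B1 B2 B3).submatrix id f).det ≠ 0 := by
  have h01 : f 0 < f 1 := hf (by decide)
  have h12 : f 1 < f 2 := hf (by decide)
  intro h
  suffices key : ∀ v : k, v ≠ 0 → ∀ d : k, d = 0 → d ≠ v10 B0 B1 B2 B3 ^ 2 * v ∧
      d ≠ -(v10 B0 B1 B2 B3 ^ 2 * v) by
    rw [Matrix.det_fin_three] at h
    simp only [Matrix.submatrix_apply, id] at h
    generalize f 0 = a, f 1 = b, f 2 = c at h h01 h12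
    fin_cases a <;> fin_cases b <;> first
      | exact absurd h01 (by decide)
      | (fin_cases c <;> first
          | exact absurd h12 (by decide)
          | (simp [coeffMatrix, -mul_eq_zero] at h
             first
             | exact (key _ h1 _ h).1 (by simp only [v1, v2, v3, v4, v5, v6, v7, v8, v9, v10]; ring1)
             | exact (key _ h1 _ h).2 (by simp only [v1, v2, v3, v4, v5, v6, v7, v8, v9, v10]; ring1)
             | exact (key _ h2 _ h).1 (by simp only [v1, v2, v3, v4, v5, v6, v7, v8, v9, v10]; ring1)
             | exact (key _ h2 _ h).2 (by simp only [v1, v2, v3, v4, v5, v6, v7, v8, v9, v10]; ring1)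
             | exact (key _ h3 _ h).1 (by simp only [v1, v2, v3, v4, v5, v6, v7, v8, v9, v10]; ring1)
             | exact (key _ h3 _ h).2 (by simp only [v1, v2, v3, v4, v5, v6, v7, v8, v9, v10]; ring1)
             | exact (key _ h4 _ h).1 (by simp only [v1, v2, v3, v4, v5, v6, v7, v8, v9, v10]; ring1)
             | exact (key _ h4 _ h).2 (by simp only [v1, v2, v3, v4, v5, v6, v7, v8, v9, v10]; ring1)
             | exact (key _ h5 _ h).1 (by simp only [v1, v2, v3, v4, v5, v6, v7, v8, v9, v10]; ring1)
             | exact (key _ h5 _ h).2 (by simp only [v1, v2, v3, v4, v5, v6, v7, v8, v9, v10]; ring1)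
             | exact (key _ h6 _ h).1 (by simp only [v1, v2, v3, v4, v5, v6, v7, v8, v9, v10]; ring1)
             | exact (key _ h6 _ h).2 (by simp only [v1, v2, v3, v4, v5, v6, v7, v8, v9, v10]; ring1)
             | exact (key _ h7 _ h).1 (by simp only [v1, v2, v3, v4, v5, v6, v7, v8, v9, v10]; ring1)
             | exact (key _ h7 _ h).2 (by simp only [v1, v2, v3, v4, v5, v6, v7, v8, v9, v10]; ring1)
             | exact (key _ h8 _ h).1 (by simp only [v1, v2, v3, v4, v5, v6, v7, v8, v9, v10]; ring1)
             | exact (key _ h8 _ h).2 (by simp only [v1, v2, v3, v4, v5, v6, v7, v8, v9, v10]; ring1)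
             | exact (key _ h9 _ h).1 (by simp only [v1, v2, v3, v4, v5, v6, v7, v8, v9, v10]; ring1)
             | exact (key _ h9 _ h).2 (by simp only [v1, v2, v3, v4, v5, v6, v7, v8, v9, v10]; ring1)
             | exact (key _ h10 _ h).1 (by simp only [v1, v2, v3, v4, v5, v6, v7, v8, v9, v10]; ring1)))
  rintro v hv d rfl
  have := mul_ne_zero (pow_ne_zero 2 h10) hv
  exact ⟨this.symm, (neg_ne_zero.2 this).symm⟩

theorem smooth_complete_intersection_jacobian_rank
    {k : Type*} [Field k] (hchar : ringChar k ≠ 2)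
    (B0 B1 B2 B3 : k)
    (h1 : v1 B0 B1 B2 B3 ≠ 0) (h2 : v2 B0 B1 B2 B3 ≠ 0) (h3 : v3 B0 B1 B2 B3 ≠ 0)
    (h4 : v4 B0 B1 B2 B3 ≠ 0) (h5 : v5 B0 B1 B2 B3 ≠ 0) (h6 : v6 B0 B1 B2 B3 ≠ 0)
    (h7 : v7 B0 B1 B2 B3 ≠ 0) (h8 : v8 B0 B1 B2 B3 ≠ 0) (h9 : v9 B0 B1 B2 B3 ≠ 0)
    (h10 : v10 B0 B1 B2 B3 ≠ 0)
    (x : Fin 6 → k) (hx : x ≠ 0)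
    (hE1 : v10 B0 B1 B2 B3 * x 0 ^ 2 + v1 B0 B1 B2 B3 * x 3 ^ 2
      - v2 B0 B1 B2 B3 * x 4 ^ 2 - v5 B0 B1 B2 B3 * x 5 ^ 2 = 0)
    (hE2 : v10 B0 B1 B2 B3 * x 1 ^ 2 + v3 B0 B1 B2 B3 * x 3 ^ 2
      - v4 B0 B1 B2 B3 * x 4 ^ 2 - v8 B0 B1 B2 B3 * x 5 ^ 2 = 0)
    (hE3 : v10 B0 B1 B2 B3 * x 2 ^ 2 + v6 B0 B1 B2 B3 * x 3 ^ 2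
      - v9 B0 B1 B2 B3 * x 4 ^ 2 - v7 B0 B1 B2 B3 * x 5 ^ 2 = 0) :
    (Matrix.of ![![v10 B0 B1 B2 B3 * x 0, 0, 0, v1 B0 B1 B2 B3 * x 3,
        -(v2 B0 B1 B2 B3 * x 4), -(v5 B0 B1 B2 B3 * x 5)],
      ![0, v10 B0 B1 B2 B3 * x 1, 0, v3 B0 B1 B2 B3 * x 3,
        -(v4 B0 B1 B2 B3 * x 4), -(v8 B0 B1 B2 B3 * x 5)],
      ![0, 0, v10 B0 B1 B2 B3 * x 2, v6 B0 B1 B2 B3 * x 3,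
        -(v9 B0 B1 B2 B3 * x 4), -(v7 B0 B1 B2 B3 * x 5)]]).rank = 3 := by
  have hJ := rank_mul_diagonal_eq_three (coeffMatrix B0 B1 B2 B3)
    (minor_ne_zero B0 B1 B2 B3 h1 h2 h3 h4 h5 h6 h7 h8 h9 h10) x hx (by
      funext i
      fin_cases i
      · simp [coeffMatrix, Matrix.mulVec, dotProduct, Fin.sum_univ_six]
        linear_combination hE1
      · simp [coeffMatrix, Matrix.mulVec, dotProduct, Fin.sum_univ_six]
        linear_combination hE2
      · simp [coeffMatrix, Matrix.mulVec, dotProduct, Fin.sum_univ_six]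
        linear_combination hE3)
  convert hJ using 2
  ext i j
  rw [Matrix.mul_diagonal]
  fin_cases i <;> fin_cases j <;> simp [coeffMatrix]
end

section
/- For all B0, B1, B2, B3 in a commutative ring, the determinant of the 3×3 matrix [[a1, −a2, −a5], [a3, −a4, −a8], [a6, −a9, −a7]] built from the Veronese quadrics equals a10³, i.e. det M = (2(B0B3−B1B2))³ as a polynomial identity in B0, B1, B2, B3. -/
theorem det_M_eq_a10_cubed {R : Type*} [CommRing R] (B0 B1 B2 B3 : R) :
    Matrix.det !![v1 B0 B1 B2 B3, -v2 B0 B1 B2 B3, -v5 B0 B1 B2 B3;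
      v3 B0 B1 B2 B3, -v4 B0 B1 B2 B3, -v8 B0 B1 B2 B3;
      v6 B0 B1 B2 B3, -v9 B0 B1 B2 B3, -v7 B0 B1 B2 B3] =
    (2 * (B0 * B3 - B1 * B2)) ^ 3 := by
  -- A formal polynomial identity: cofactor expansion, then normalization.
  rw [Matrix.det_fin_three]
  simp [v1, v2, v3, v4, v5, v6, v7, v8, v9]
  ring
end

section
/- For each prime p ∈ {3, 5, 7, 11, 13, 17}, there do not exist B0, B1, B2, B3 ∈ 𝔽_p, not all zero, a scalar λ ∈ 𝔽_p with λ ≠ 0, and A1, …, A10 ∈ 𝔽_p with Aᵢ ≠ 0 for all i, such that Aᵢ² = λ·aᵢ(B0,B1,B2,B3) for all i = 1, …, 10, where a1, …, a10 are the ten Veronese quadrics. (Hence over these prime fields there is no point of ℙ³(𝔽_p) × ℙ⁹(𝔽_p) with all Aᵢ ≠ 0 satisfying the quadric relations of the Veronese map, and the construction gives no Kummer surface with 32 lines over 𝔽_p.) -/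
/-- All the products `v₁ vᵢ` of Veronese quadrics at `B` have `m`-th power `1`. For `m = (p - 1) / 2`
over `ZMod p` with `p` an odd prime, Euler's criterion says that the `vᵢ` are nonzero and lie in
the same class modulo squares. -/
def Admissible {R : Type*} [CommRing R] (m : ℕ) (B0 B1 B2 B3 : R) : Prop :=
  (v1 B0 B1 B2 B3 * v2 B0 B1 B2 B3) ^ m = 1 ∧
  (v1 B0 B1 B2 B3 * v3 B0 B1 B2 B3) ^ m = 1 ∧
  (v1 B0 B1 B2 B3 * v4 B0 B1 B2 B3) ^ m = 1 ∧
  (v1 B0 B1 B2 B3 * v5 B0 B1 B2 B3) ^ m = 1 ∧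
  (v1 B0 B1 B2 B3 * v6 B0 B1 B2 B3) ^ m = 1 ∧
  (v1 B0 B1 B2 B3 * v7 B0 B1 B2 B3) ^ m = 1 ∧
  (v1 B0 B1 B2 B3 * v8 B0 B1 B2 B3) ^ m = 1 ∧
  (v1 B0 B1 B2 B3 * v9 B0 B1 B2 B3) ^ m = 1 ∧
  (v1 B0 B1 B2 B3 * v10 B0 B1 B2 B3) ^ m = 1

/-- The products `v₁ vᵢ` are homogeneous of degree `4`. -/
lemma Admissible.smul {R : Type*} [CommRing R] {m : ℕ} {B0 B1 B2 B3 : R} (c : R)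
    (hc : (c ^ 4) ^ m = 1) (h : Admissible m B0 B1 B2 B3) :
    Admissible m (c * B0) (c * B1) (c * B2) (c * B3) := by
  have key : ∀ x y : R, y = c ^ 4 * x → x ^ m = 1 → y ^ m = 1 := by
    rintro x _ rfl hx
    rw [mul_pow, hc, hx, one_mul]
  obtain ⟨h2, h3, h4, h5, h6, h7, h8, h9, h10⟩ := h
  refine ⟨key _ _ ?_ h2, key _ _ ?_ h3, key _ _ ?_ h4, key _ _ ?_ h5, key _ _ ?_ h6,
    key _ _ ?_ h7, key _ _ ?_ h8, key _ _ ?_ h9, key _ _ ?_ h10⟩ <;>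
  · simp only [v1, v2, v3, v4, v5, v6, v7, v8, v9, v10]
    ring

lemma sq_pow_half {p : ℕ} [Fact p.Prime] (hp : p ≠ 2) {c : ZMod p} (hc : c ≠ 0) :
    (c ^ 2) ^ (p / 2) = 1 := by
  have h2 : 2 * (p / 2) = p - 1 := by
    have := (Fact.out : p.Prime).eq_two_or_odd
    omega
  rw [← pow_mul, h2, ZMod.pow_card_sub_one_eq_one hc]

lemma mul_pow_half_eq_one {p : ℕ} [Fact p.Prime] (hp : p ≠ 2) {l a b x y : ZMod p}
    (hl : l ≠ 0) (hx : x ≠ 0) (hy : y ≠ 0) (ha : x ^ 2 = l * a) (hb : y ^ 2 = l * b) :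
    (a * b) ^ (p / 2) = 1 := by
  have h : a * b = (x * y / l) ^ 2 := by
    rw [div_pow, mul_pow, ha, hb]
    field_simp
  rw [h]
  exact sq_pow_half hp (div_ne_zero (mul_ne_zero hx hy) hl)

lemma admissible_of_kummer_point {p : ℕ} [Fact p.Prime] (hp : p ≠ 2)
    {B0 B1 B2 B3 lam : ZMod p} {A : Fin 10 → ZMod p} (hl : lam ≠ 0) (hA : ∀ i, A i ≠ 0)
    (h : A 0 ^ 2 = lam * v1 B0 B1 B2 B3 ∧
        A 1 ^ 2 = lam * v2 B0 B1 B2 B3 ∧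
        A 2 ^ 2 = lam * v3 B0 B1 B2 B3 ∧
        A 3 ^ 2 = lam * v4 B0 B1 B2 B3 ∧
        A 4 ^ 2 = lam * v5 B0 B1 B2 B3 ∧
        A 5 ^ 2 = lam * v6 B0 B1 B2 B3 ∧
        A 6 ^ 2 = lam * v7 B0 B1 B2 B3 ∧
        A 7 ^ 2 = lam * v8 B0 B1 B2 B3 ∧
        A 8 ^ 2 = lam * v9 B0 B1 B2 B3 ∧
        A 9 ^ 2 = lam * v10 B0 B1 B2 B3) :
    Admissible (p / 2) B0 B1 B2 B3 := by
  obtain ⟨h1, h2, h3, h4, h5, h6, h7, h8, h9, h10⟩ := h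
  have key {i : Fin 10} {b : ZMod p} (hb : A i ^ 2 = lam * b) :
      (v1 B0 B1 B2 B3 * b) ^ (p / 2) = 1 :=
    mul_pow_half_eq_one hp hl (hA 0) (hA i) h1 hb
  exact ⟨key h2, key h3, key h4, key h5, key h6, key h7, key h8, key h9, key h10⟩

/-- By homogeneity, it suffices to exclude admissible vectors with `B₀ ∈ {0, 1}`. -/
lemma not_admissible_of_normalized {p : ℕ} [Fact p.Prime] (hp : p ≠ 2)
    (H : ∀ B1 B2 B3 : ZMod p,
      ¬ Admissible (p / 2) 0 B1 B2 B3 ∧ ¬ Admissible (p / 2) 1 B1 B2 B3)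
    (B0 B1 B2 B3 : ZMod p) : ¬ Admissible (p / 2) B0 B1 B2 B3 := by
  intro h
  rcases eq_or_ne B0 0 with rfl | h0
  · exact (H B1 B2 B3).1 h
  · have hc : (B0⁻¹ ^ 4) ^ (p / 2) = 1 := by
      have := sq_pow_half hp (pow_ne_zero 2 (inv_ne_zero h0))
      rwa [← pow_mul B0⁻¹ 2 2] at this
    have := h.smul _ hc
    rw [inv_mul_cancel₀ h0] at this
    exact (H _ _ _).2 this

/-- Euler's test in natural numbers: `x * y` has `(p / 2)`-th power `1` modulo `p`. -/
def eulerTest (p x y : ℕ) : Bool := Nat.beq ((x * y) ^ (p / 2) % p) 1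

/-- `Admissible (p / 2)` over `ZMod p` for a vector of natural numbers, with `p - 1` in the role of
`-1`. Plain natural-number arithmetic keeps evaluation by the kernel fast. -/
def admissibleTest (p b0 b1 b2 b3 : ℕ) : Bool :=
  let u := b0 ^ 2 + b1 ^ 2 + b2 ^ 2 + b3 ^ 2
  eulerTest p u (b0 ^ 2 + (p - 1) * b1 ^ 2 + b2 ^ 2 + (p - 1) * b3 ^ 2) &&
  (eulerTest p u (b0 ^ 2 + b1 ^ 2 + (p - 1) * b2 ^ 2 + (p - 1) * b3 ^ 2) &&
  (eulerTest p u (b0 ^ 2 + (p - 1) * b1 ^ 2 + (p - 1) * b2 ^ 2 + b3 ^ 2) &&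
  (eulerTest p u (2 * (b0 * b1 + b2 * b3)) &&
  (eulerTest p u (2 * (b0 * b2 + b1 * b3)) &&
  (eulerTest p u (2 * (b0 * b3 + b1 * b2)) &&
  (eulerTest p u (2 * (b0 * b1 + (p - 1) * (b2 * b3))) &&
  (eulerTest p u (2 * (b0 * b2 + (p - 1) * (b1 * b3))) &&
  eulerTest p u (2 * (b0 * b3 + (p - 1) * (b1 * b2))))))))))

lemma admissibleTest_of_admissible {p : ℕ} (hp : 1 < p) {b0 b1 b2 b3 : ℕ}
    (h : Admissible (p / 2) (b0 : ZMod p) b1 b2 b3) : admissibleTest p b0 b1 b2 b3 = true := by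
  have key : ∀ {x y : ℕ} {a b : ZMod p}, (a * b) ^ (p / 2) = 1 → (x : ZMod p) = a →
      (y : ZMod p) = b → eulerTest p x y = true := by
    rintro x y _ _ h rfl rfl
    have h' : (((x * y) ^ (p / 2) : ℕ) : ZMod p) = (1 : ℕ) := by push_cast; exact h
    rw [ZMod.natCast_eq_natCast_iff', Nat.mod_eq_of_lt hp] at h'
    exact Nat.beq_eq.mpr h'
  have hneg : ((p - 1 : ℕ) : ZMod p) = -1 := by simp [Nat.cast_sub hp.le]
  obtain ⟨h2, h3, h4, h5, h6, h7, h8, h9, h10⟩ := h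
  simp only [admissibleTest, Bool.and_eq_true]
  refine ⟨key h2 ?_ ?_, key h3 ?_ ?_, key h4 ?_ ?_, key h5 ?_ ?_, key h6 ?_ ?_, key h7 ?_ ?_,
    key h8 ?_ ?_, key h9 ?_ ?_, key h10 ?_ ?_⟩ <;>
  · simp only [v1, v2, v3, v4, v5, v6, v7, v8, v9, v10]
    push_cast [hneg]
    ring

lemma admissibleTest_eq_false {p : ℕ}
    (hp : p = 3 ∨ p = 5 ∨ p = 7 ∨ p = 11 ∨ p = 13 ∨ p = 17) :
    ∀ b1 < p, ∀ b2 < p, ∀ b3 < p,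
      admissibleTest p 0 b1 b2 b3 = false ∧ admissibleTest p 1 b1 b2 b3 = false := by
  rcases hp with rfl | rfl | rfl | rfl | rfl | rfl <;> decide +kernel

lemma not_admissible_normalized {p : ℕ}
    (hp : p = 3 ∨ p = 5 ∨ p = 7 ∨ p = 11 ∨ p = 13 ∨ p = 17) (B1 B2 B3 : ZMod p) :
    ¬ Admissible (p / 2) 0 B1 B2 B3 ∧ ¬ Admissible (p / 2) 1 B1 B2 B3 := by
  have h1 : 1 < p := by omega
  have : NeZero p := ⟨by omega⟩
  have H := admissibleTest_eq_false hp _ B1.val_lt _ B2.val_lt _ B3.val_lt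
  refine ⟨fun h => ?_, fun h => ?_⟩
  · have := admissibleTest_of_admissible (b0 := 0) (b1 := B1.val) (b2 := B2.val) (b3 := B3.val) h1
      (by simpa using h)
    simp [H.1] at this
  · have := admissibleTest_of_admissible (b0 := 1) (b1 := B1.val) (b2 := B2.val) (b3 := B3.val) h1
      (by simpa using h)
    simp [H.2] at this

theorem no_kummer_point_over_small_primes :
    ∀ p ∈ ({3, 5, 7, 11, 13, 17} : Finset ℕ),
      ¬ ∃ (B0 B1 B2 B3 lam : ZMod p) (A : Fin 10 → ZMod p),
        (¬ (B0 = 0 ∧ B1 = 0 ∧ B2 = 0 ∧ B3 = 0)) ∧ lam ≠ 0 ∧ (∀ i, A i ≠ 0) ∧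
        A 0 ^ 2 = lam * v1 B0 B1 B2 B3 ∧
        A 1 ^ 2 = lam * v2 B0 B1 B2 B3 ∧
        A 2 ^ 2 = lam * v3 B0 B1 B2 B3 ∧
        A 3 ^ 2 = lam * v4 B0 B1 B2 B3 ∧
        A 4 ^ 2 = lam * v5 B0 B1 B2 B3 ∧
        A 5 ^ 2 = lam * v6 B0 B1 B2 B3 ∧
        A 6 ^ 2 = lam * v7 B0 B1 B2 B3 ∧
        A 7 ^ 2 = lam * v8 B0 B1 B2 B3 ∧
        A 8 ^ 2 = lam * v9 B0 B1 B2 B3 ∧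
        A 9 ^ 2 = lam * v10 B0 B1 B2 B3 := by
  intro p hp
  rintro ⟨B0, B1, B2, B3, lam, A, -, hl, hA, h⟩
  simp only [Finset.mem_insert, Finset.mem_singleton] at hp
  have hprime : p.Prime := by rcases hp with rfl | rfl | rfl | rfl | rfl | rfl <;> norm_num
  have hp2 : p ≠ 2 := by omega
  have : Fact p.Prime := ⟨hprime⟩
  exact not_admissible_of_normalized hp2 (not_admissible_normalized hp) B0 B1 B2 B3
    (admissible_of_kummer_point hp2 hl hA h)
end
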